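/- Let n = 2m with m ≥ 1, let t be an integer with 1 ≤ t ≤ m-1 such that m/gcd(m,t) is odd. Then the Boolean function on 𝔽₂^n defined by f_t(x₀,…,x_{n-1}) = Σ_{i=0}^{n-1} (x_i·x_{i+t}·x_{i+m} + x_i·x_{i+t}) + Σ_{i=0}^{m-1} x_i·x_{i+m} (indices modulo n) is a rotation symmetric bent function. -/

import Mathlib

/-!
Write `n = 2 m`. Adding to `x` an `m`-periodic vector `c` leaves `u i = x i + x (i + m)` unchanged,
and `f (x + c) = f x + ∑ j, c j * π(u) j` with `π(u) j = u j * u (j + t) + u j + 1 + u (j - t)`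
(`quad_shift`). So in the coordinates `(u, v)` given by `x = (v, v + u)` (the map `glue`), `f` is a
Maiorana–McFarland function `∑ j, v j * π(u) j + g(u)`, and its Walsh transform is `± 2 ^ m`
as soon as `π` is a permutation of `𝔽₂ᵐ` (`walsh_of_shift`).

Up to complementing all bits, `π` is the map `w ↦ w (j - t) + (w j + 1) * w (j + t)`, known as the
`χ` map of Keccak. It is injective because the orbits of `j ↦ j + t` on `ℤ/m` have odd length
`m / gcd(m, t)`: for two preimages of one vector, the positions where they agree are closed under
`j ↦ j - 2 t`, so on an orbit of odd length they agree everywhere or nowhere; in the latter case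
each preimage alternates along the orbit, which odd length forbids (`chiPerm_injective`).
-/

/-- The Walsh transform of a Boolean function `f : 𝔽₂ⁿ → 𝔽₂` at `b ∈ 𝔽₂ⁿ`:
`W_f(b) = Σ_{x ∈ 𝔽₂ⁿ} (-1)^{f(x) + Σᵢ xᵢ bᵢ}`, the exponent lifted from `𝔽₂` to `{0,1} ⊆ ℤ`. -/
def walshTransform {n : ℕ} [NeZero n] (f : (ZMod n → ZMod 2) → ZMod 2)
    (b : ZMod n → ZMod 2) : ℤ :=
  ∑ x : ZMod n → ZMod 2, (-1 : ℤ) ^ (f x + ∑ i : ZMod n, x i * b i).val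

/-- `f` is bent if `W_f(b) = ±2^{n/2}` for every `b`. -/
def IsBent {n : ℕ} [NeZero n] (f : (ZMod n → ZMod 2) → ZMod 2) : Prop :=
  ∀ b, walshTransform f b = 2 ^ (n / 2) ∨ walshTransform f b = -(2 ^ (n / 2))

/-- A Boolean function `f` on `𝔽₂ⁿ` (coordinates indexed modulo `n`) is rotation symmetric if
`f(x₁,…,x_{n-1},x₀) = f(x₀,…,x_{n-1})` for all `x`. -/
def RotationSymmetric {n : ℕ} (f : (ZMod n → ZMod 2) → ZMod 2) : Prop :=
  ∀ x : ZMod n → ZMod 2, f (fun i => x (i + 1)) = f x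

/-- The sign `(-1) ^ a` of `a : 𝔽₂`. -/
def sgn (a : ZMod 2) : ℤ := (-1 : ℤ) ^ a.val

lemma sgn_add : ∀ a b : ZMod 2, sgn (a + b) = sgn a * sgn b := by
  unfold sgn; decide

lemma zmod_two_cases : ∀ a : ZMod 2, a = 0 ∨ a = 1 := by decide

/-- The permutation `π` through which `f` is a Maiorana–McFarland function. -/
def chiPerm {m : ℕ} (t : ZMod m) (u : ZMod m → ZMod 2) : ZMod m → ZMod 2 :=
  fun j => u j * u (j + t) + u j + 1 + u (j - t)

/-- If two preimages disagree at `j - t`, `j`, `j + t`, then the first alternates from `j` to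
`j + t`. -/
lemma chi_alt : ∀ a b c a' b' c' : ZMod 2,
    b * c + b + 1 + a = b' * c' + b' + 1 + a' → a ≠ a' → b ≠ b' → c ≠ c' → c = b + 1 := by decide

/-- `a, b, c, e` stand for the values of `u` at `j - t, j, j + t, j + 2 t`: agreement of two
preimages propagates from `j + t` to `j - t`. -/
lemma chi_local : ∀ a b c e a' b' c' e' : ZMod 2,
    b * c + b + 1 + a = b' * c' + b' + 1 + a' →
    c * e + c + 1 + b = c' * e' + c' + 1 + b' → c = c' → a = a' := by decide

lemma chiPerm_injective {m : ℕ} (t : ZMod m) (k : ℕ) (hk : Odd k) (hkt : (k : ZMod m) * t = 0) :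
    Function.Injective (chiPerm t) := by
  intro u u' h
  have hj : ∀ j, u j * u (j + t) + u j + 1 + u (j - t)
      = u' j * u' (j + t) + u' j + 1 + u' (j - t) := fun j => congrFun h j
  have step : ∀ j, u j = u' j → u (j - 2 * t) = u' (j - 2 * t) := by
    intro j hjj
    have h1 := hj (j - t)
    have h2 := hj j
    rw [show j - t + t = j by ring, show j - t - t = j - 2 * t by ring] at h1
    exact chi_local _ _ _ _ _ _ _ _ h1 h2 hjj
  have steps : ∀ (r : ℕ) j, u j = u' j → u (j - r * (2 * t)) = u' (j - r * (2 * t)) := by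
    intro r
    induction r with
    | zero => intro j hjj; simpa using hjj
    | succ r ih =>
      intro j hjj
      have := step _ (ih j hjj)
      rw [show j - ((r + 1 : ℕ) : ZMod m) * (2 * t) = j - r * (2 * t) - 2 * t by push_cast; ring]
      exact this
  obtain ⟨r, rfl⟩ := hk
  push_cast at hkt
  have back : ∀ j, u j = u' j → u (j - t) = u' (j - t) := by
    intro j hjj
    have := steps (r + 1) j hjj
    rwa [show j - ((r + 1 : ℕ) : ZMod m) * (2 * t) = j - t by
      push_cast; linear_combination -hkt] at this
  have forw : ∀ j, u j = u' j → u (j + t) = u' (j + t) := by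
    intro j hjj
    have := steps r j hjj
    rwa [show j - (r : ZMod m) * (2 * t) = j + t by linear_combination -hkt] at this
  funext j
  by_contra hne
  have hall : ∀ s : ℕ, u (j + s * t) ≠ u' (j + s * t) := by
    intro s
    induction s with
    | zero => simpa using hne
    | succ s ih =>
      intro he
      apply ih
      have := back _ he
      rwa [show j + ((s + 1 : ℕ) : ZMod m) * t - t = j + s * t by push_cast; ring] at this
  have alt : ∀ s : ℕ, u (j + s * t) = u j + s := by
    intro s
    induction s with
    | zero => simp
    | succ s ih =>
      have h0 := hall s
      have h1 := hall (s + 1)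
      rw [show j + ((s + 1 : ℕ) : ZMod m) * t = j + s * t + t by push_cast; ring] at h1 ⊢
      have h2 : u (j + s * t - t) ≠ u' (j + s * t - t) := by
        intro he
        have := forw _ he
        rw [sub_add_cancel] at this
        exact h0 this
      rw [chi_alt _ _ _ _ _ _ (hj (j + s * t)) h2 h0 h1, ih]
      push_cast; ring
  -- going once around the orbit flips the bit an odd number of times
  have := alt (2 * r + 1)
  push_cast at this
  rw [hkt, add_zero, show (2 : ZMod 2) = 0 from rfl] at this
  revert this
  generalize u j = a
  revert a
  simp

/-- Orthogonality of characters of `𝔽₂ᵐ`. -/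
lemma sum_sgn {ι : Type*} [Fintype ι] [DecidableEq ι] (a : ι → ZMod 2) :
    ∑ v : ι → ZMod 2, sgn (∑ j, v j * a j) = if a = 0 then 2 ^ Fintype.card ι else 0 := by
  split_ifs with h
  · subst h
    simp [sgn]
  · obtain ⟨j, hj⟩ := Function.ne_iff.mp h
    have hj1 : a j = 1 := (zmod_two_cases _).resolve_left hj
    have h1 := Equiv.sum_comp (Equiv.addRight (Pi.single j (1 : ZMod 2)))
      (fun v : ι → ZMod 2 => sgn (∑ j, v j * a j))
    have h2 : ∀ v : ι → ZMod 2, sgn (∑ i, (Equiv.addRight (Pi.single j (1 : ZMod 2)) v) i * a i)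
        = - sgn (∑ i, v i * a i) := by
      intro v
      have : ∑ i, (Equiv.addRight (Pi.single j (1 : ZMod 2)) v) i * a i
          = ∑ i, v i * a i + 1 := by
        simp [add_mul, Finset.sum_add_distrib, Pi.single_apply, hj1]
      rw [this, sgn_add]
      simp [sgn, ZMod.val_one]
    simp only [h2, Finset.sum_neg_distrib] at h1
    linarith

lemma sum_zmod_eq_range {M : Type*} [AddCommMonoid M] (n : ℕ) [NeZero n] (g : ZMod n → M) :
    ∑ i : ZMod n, g i = ∑ i ∈ Finset.range n, g (i : ZMod n) := by
  refine Finset.sum_bij' (fun i _ => i.val) (fun i _ => (i : ZMod n)) ?_ ?_ ?_ ?_ ?_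
  · intro i _; simpa using ZMod.val_lt i
  · simp
  · simp
  · intro i hi; exact ZMod.val_cast_of_lt (Finset.mem_range.mp hi)
  · simp

lemma sum_range_shift {M : Type*} [AddCommMonoid M] (n : ℕ) (g : ℕ → M) (h : g n = g 0) :
    ∑ i ∈ Finset.range n, g (i + 1) = ∑ i ∈ Finset.range n, g i := by
  cases n with
  | zero => simp
  | succ n => rw [Finset.sum_range_succ, Finset.sum_range_succ', h]

lemma sum_range_two_mul {M : Type*} [AddCommMonoid M] (m : ℕ) (g : ℕ → M) :
    ∑ i ∈ Finset.range (2 * m), g i = ∑ i ∈ Finset.range m, (g i + g (i + m)) := by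
  rw [two_mul, Finset.sum_range_add, Finset.sum_add_distrib]
  simp only [add_comm m]

lemma cast_two_mul_self (m : ℕ) : (m : ZMod (2 * m)) + m = 0 := by
  have := ZMod.natCast_self (2 * m)
  push_cast at this
  rw [← this]; ring

/-- Reduction `ℤ/2m → ℤ/m`. -/
def red (m : ℕ) : ZMod (2 * m) →+* ZMod m := ZMod.castHom (Dvd.intro_left 2 rfl) (ZMod m)

/-- The vector `(v, v + u)` of `𝔽₂^{2m}`, indexed by `ℤ/2m`. -/
def glue (m : ℕ) (u v : ZMod m → ZMod 2) : ZMod (2 * m) → ZMod 2 :=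
  fun i => v (red m i) + if i.val < m then 0 else u (red m i)

lemma glue_eq (m : ℕ) (u v : ZMod m → ZMod 2) :
    glue m u v = glue m u 0 + fun i => v (red m i) := by
  funext i
  simp [glue, add_comm]

lemma glue_lo (m : ℕ) (u v : ZMod m → ZMod 2) (i : ℕ) (hi : i < m) :
    glue m u v (i : ZMod (2 * m)) = v i := by
  have : ((i : ℕ) : ZMod (2 * m)).val = i := ZMod.val_cast_of_lt (by omega)
  simp [glue, this, hi]

lemma glue_hi (m : ℕ) (u v : ZMod m → ZMod 2) (i : ℕ) (hi : i < m) :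
    glue m u v ((i : ZMod (2 * m)) + m) = v i + u i := by
  have : ((i : ZMod (2 * m)) + m).val = i + m := by
    rw [← Nat.cast_add]; exact ZMod.val_cast_of_lt (by omega)
  simp [glue, this]

lemma glue_add (m : ℕ) [NeZero m] (u v : ZMod m → ZMod 2) (i : ZMod (2 * m)) :
    glue m u v i + glue m u v (i + m) = u (red m i) := by
  obtain ⟨k, hk, rfl⟩ : ∃ k, k < 2 * m ∧ (k : ZMod (2 * m)) = i :=
    ⟨i.val, ZMod.val_lt i, by simp⟩
  have two : ∀ a b : ZMod 2, a + (a + b) = b := by decide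
  rcases lt_or_ge k m with h | h
  · rw [glue_lo _ _ _ _ h, glue_hi _ _ _ _ h, two]; simp
  · obtain ⟨l, rfl⟩ := Nat.exists_eq_add_of_le' h
    have hl : l < m := by omega
    push_cast
    rw [add_assoc, cast_two_mul_self, add_zero, glue_lo _ _ _ _ hl, glue_hi _ _ _ _ hl,
      add_comm, two]
    simp

lemma glue_bijective (m : ℕ) [NeZero m] :
    Function.Bijective (fun p : (ZMod m → ZMod 2) × (ZMod m → ZMod 2) => glue m p.1 p.2) := by
  rw [Fintype.bijective_iff_injective_and_card]
  constructor
  · rintro ⟨u, v⟩ ⟨u', v'⟩ h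
    have hv : v = v' := by
      funext j
      have := congrFun h ((j.val : ℕ) : ZMod (2 * m))
      simp only at this
      rw [glue_lo _ _ _ _ (ZMod.val_lt j), glue_lo _ _ _ _ (ZMod.val_lt j)] at this
      simpa only [ZMod.natCast_zmod_val] using this
    have hu : u = u' := by
      funext j
      have h1 := glue_add m u v ((j.val : ℕ) : ZMod (2 * m))
      have h2 := glue_add m u' v' ((j.val : ℕ) : ZMod (2 * m))
      simp only at h
      rw [h, h2] at h1
      simpa using h1.symm
    rw [hu, hv]
  · simp [ZMod.card, two_mul, pow_add]

/-- A function that is affine along the `m`-periodic directions, with linear part a permutation `π`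
of `u`, has all its Walsh coefficients equal to `± 2 ^ m`; stated here for the Walsh coefficient
at `0`, with `G` in the role of `f` plus a linear function and `B` its effect on `π`. -/
lemma walsh_of_shift (m : ℕ) [NeZero m] (G : (ZMod (2 * m) → ZMod 2) → ZMod 2)
    (π : (ZMod m → ZMod 2) → ZMod m → ZMod 2) (hπ : Function.Injective π) (B : ZMod m → ZMod 2)
    (hG : ∀ u v, G (glue m u v) = ∑ j, v j * (π u j + B j) + G (glue m u 0)) :
    ∑ x, sgn (G x) = 2 ^ m ∨ ∑ x, sgn (G x) = -2 ^ m := by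
  obtain ⟨u₀, hu₀⟩ := (Finite.injective_iff_surjective.mp hπ) B
  have two : ∀ a b : ZMod 2, a + b = 0 ↔ a = b := by decide
  have key : ∀ u : ZMod m → ZMod 2, (fun j => π u j + B j) = 0 ↔ u = u₀ := by
    intro u
    rw [← hπ.eq_iff (a := u), hu₀, funext_iff, funext_iff]
    simp [two]
  have h : ∑ x, sgn (G x) = 2 ^ m * sgn (G (glue m u₀ 0)) := by
    rw [← (Equiv.ofBijective _ (glue_bijective m)).sum_comp, Fintype.sum_prod_type]
    simp only [Equiv.ofBijective_apply]
    have : ∀ u : ZMod m → ZMod 2, ∑ v : ZMod m → ZMod 2,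
        sgn (G (glue m u v))
        = if u = u₀ then 2 ^ m * sgn (G (glue m u 0)) else 0 := by
      intro u
      rw [Finset.sum_congr rfl fun v _ => (congrArg sgn (hG u v)).trans (sgn_add _ _),
        ← Finset.sum_mul, sum_sgn (fun j => π u j + B j)]
      simp only [key, ZMod.card, ite_mul, zero_mul]
    simp only [this, Finset.sum_ite_eq', Finset.mem_univ, if_true]
  have hs : ∀ a : ZMod 2, sgn a = 1 ∨ sgn a = -1 := by unfold sgn; decide
  rw [h]
  rcases hs (G (glue m u₀ 0)) with h | h <;> simp [h]

/-- The part of `f` contributed by the positions `i` and `i + m`, in the values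
`a, a'` of `x` at `i, i + m` and `b, b'` at `i + t, i + t + m`; `c, d` are the shifts of those
pairs. -/
lemma quad_local : ∀ a a' b b' c d : ZMod 2,
    (a + c) * (b + d) * (a' + c) + (a + c) * (b + d)
      + ((a' + c) * (b' + d) * (a + c) + (a' + c) * (b' + d)) + (a + c) * (a' + c)
    = a * b * a' + a * b + (a' * b' * a + a' * b') + a * a'
      + (c * ((a + a') * (b + b') + (a + a') + 1) + d * (a + a')) := by decide

lemma quad_shift (m t : ℕ) [NeZero m] (f : (ZMod (2 * m) → ZMod 2) → ZMod 2)
    (hf : ∀ x : ZMod (2 * m) → ZMod 2,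
      f x = ∑ i ∈ Finset.range (2 * m), (x i * x (i + t) * x (i + m) + x i * x (i + t)) +
        ∑ i ∈ Finset.range m, x i * x (i + m)) (u v : ZMod m → ZMod 2) :
    f (glue m u v) = ∑ j, v j * chiPerm (t : ZMod m) u j + f (glue m u 0) := by
  have hmm (i : ZMod (2 * m)) : i + m + m = i := by
    rw [add_assoc, cast_two_mul_self, add_zero]
  have hform : ∀ x, f x = ∑ i ∈ Finset.range m, (x i * x (i + t) * x (i + m) + x i * x (i + t)
      + (x (i + m) * x (i + t + m) * x i + x (i + m) * x (i + t + m)) + x i * x (i + m)) := by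
    intro x
    rw [hf, sum_range_two_mul, ← Finset.sum_add_distrib]
    refine Finset.sum_congr rfl fun i _ => ?_
    push_cast
    rw [hmm, add_right_comm (i : ZMod (2 * m)) (m : ZMod (2 * m)) (t : ZMod (2 * m))]
  have hsum : ∑ j, v j * chiPerm (t : ZMod m) u j
      = ∑ j, (v j * (u j * u (j + t) + u j + 1) + v (j + t) * u j) := by
    have := Equiv.sum_comp (Equiv.addRight (t : ZMod m)) (fun j => v j * u (j - t))
    simp only [Equiv.coe_addRight, add_sub_cancel_right] at this
    rw [Finset.sum_add_distrib, this, ← Finset.sum_add_distrib]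
    refine Finset.sum_congr rfl fun j _ => ?_
    unfold chiPerm; ring
  rw [hsum, sum_zmod_eq_range, hform, hform, glue_eq m u v, add_comm, ← Finset.sum_add_distrib]
  refine Finset.sum_congr rfl fun i _ => ?_
  have h1 := glue_add m u 0 (i : ZMod (2 * m))
  have h2 := glue_add m u 0 ((i : ZMod (2 * m)) + t)
  simp only [map_add, map_natCast] at h1 h2
  simp only [Pi.add_apply, map_add, map_natCast, CharP.cast_eq_zero, add_zero]
  rw [← h1, ← h2]
  linear_combination quad_local (glue m u 0 i) (glue m u 0 (i + m)) (glue m u 0 (i + t))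
    (glue m u 0 (i + t + m)) (v i) (v (i + t))

/-- Gao et al.: with `n = 2m`, `m ≥ 1`, and `1 ≤ t ≤ m-1` such that
`m / gcd(m,t)` is odd, the function
`f_t(x) = Σ_{i=0}^{n-1} (xᵢ·x_{i+t}·x_{i+m} + xᵢ·x_{i+t}) + Σ_{i=0}^{m-1} xᵢ·x_{i+m}`
(indices modulo `n`) is a rotation symmetric bent function. -/
theorem statement14 (m t : ℕ) (hm : 1 ≤ m) [NeZero m]
    (ht1 : 1 ≤ t) (ht2 : t ≤ m - 1) (hodd : Odd (m / Nat.gcd m t))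
    (f : (ZMod (2 * m) → ZMod 2) → ZMod 2)
    (hf : ∀ x : ZMod (2 * m) → ZMod 2,
      f x = ∑ i ∈ Finset.range (2 * m), (x i * x (i + t) * x (i + m) + x i * x (i + t)) +
        ∑ i ∈ Finset.range m, x i * x (i + m)) :
    RotationSymmetric f ∧ IsBent f := by
  constructor
  · intro x
    have hn : ((2 * m : ℕ) : ZMod (2 * m)) = 0 := ZMod.natCast_self _
    rw [hf, hf]
    congr 1
    · rw [← sum_range_shift (2 * m) (fun i : ℕ =>
        x i * x (i + t) * x (i + m) + x i * x (i + t)) (by simp only [hn, Nat.cast_zero])]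
      refine Finset.sum_congr rfl fun i _ => ?_
      push_cast
      simp only [add_right_comm _ (1 : ZMod (2 * m))]
    · rw [← sum_range_shift m (fun i : ℕ => x i * x (i + m)) (by
        simp only [cast_two_mul_self, Nat.cast_zero, zero_add, mul_comm])]
      refine Finset.sum_congr rfl fun i _ => ?_
      push_cast
      simp only [add_right_comm _ (1 : ZMod (2 * m))]
  · intro b
    have hk : ((m / Nat.gcd m t : ℕ) : ZMod m) * (t : ZMod m) = 0 := by
      rw [← Nat.cast_mul, ZMod.natCast_eq_zero_iff]
      exact ⟨t / Nat.gcd m t, by rw [Nat.div_mul_right_comm (Nat.gcd_dvd_left m t), Nat.mul_div_assoc _ (Nat.gcd_dvd_right m t)]⟩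
    have hinj := chiPerm_injective (t : ZMod m) _ hodd hk
    rw [show 2 * m / 2 = m by omega]
    refine walsh_of_shift m (fun x => f x + ∑ i, x i * b i) _ hinj
      (fun j => b ((j.val : ℕ) : ZMod (2 * m)) + b (((j.val : ℕ) : ZMod (2 * m)) + m)) ?_
    intro u v
    have hlin : ∑ i, glue m u v i * b i = ∑ i, glue m u 0 i * b i
        + ∑ j : ZMod m, v j * (b ((j.val : ℕ) : ZMod (2 * m))
          + b (((j.val : ℕ) : ZMod (2 * m)) + m)) := by
      rw [glue_eq m u v]
      simp only [Pi.add_apply, add_mul, Finset.sum_add_distrib]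
      congr 1
      rw [sum_zmod_eq_range, sum_range_two_mul, sum_zmod_eq_range]
      refine Finset.sum_congr rfl fun i hi => ?_
      rw [ZMod.val_cast_of_lt (Finset.mem_range.mp hi)]
      push_cast
      simp [mul_add]
    simp only [quad_shift m t f hf u v, hlin, mul_add, Finset.sum_add_distrib]
    ring
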